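/- Let n > 1 be an integer that is either odd, or even and not squarefree. Then (1, n^{(n-1)k} - 1, n^{(n-1)k}) is an abc triple for each positive integer k. -/

import Mathlib

open scoped Classical

/-- The radical of a natural number: the product of its distinct prime factors. -/
def rad (n : ℕ) : ℕ := ∏ p ∈ n.primeFactors, p

/-- The cosocle of a natural number: `n / rad n`. -/
def cosocle (n : ℕ) : ℕ := n / rad n

/-- `(a, b, c)` is an abc triple: `a, b, c` are relatively prime positive integers with
`a + b = c` and `rad (a*b*c) < c`. -/
def IsABCTriple (a b c : ℕ) : Prop :=
  0 < a ∧ 0 < b ∧ 0 < c ∧ a + b = c ∧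
    Nat.Coprime a b ∧ Nat.Coprime a c ∧ Nat.Coprime b c ∧ rad (a * b * c) < c

/-!
Write `b = n ^ ((n - 1) * k) - 1`. Since `b` and `b + 1` are coprime and `rad (b + 1) = rad n`, the
triple `(1, b, b + 1)` is an abc triple exactly when `rad n ≤ cosocle b`. Now `(n - 1) ^ 2` divides
`b`, so `n - 1` divides `cosocle b`. If `n` is not squarefree, then `rad n ≤ n - 1 ≤ cosocle b`.
If `n` is odd, then `8 ∣ b` excludes `cosocle b = n - 1`: otherwise `n - 1` would divide `rad b`,
making `b = (n - 1) * rad b` a product of two squarefree numbers. Hence `rad n ≤ n ≤ cosocle b`.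
-/

open UniqueFactorizationMonoid (radical radical_dvd_self radical_mul radical_pow squarefree_radical
  exists_dvd_pow_iff_radical_dvd)

theorem rad_eq_radical (n : ℕ) : rad n = radical n :=
  Nat.radical_eq_prod_primeFactors.symm

theorem rad_dvd_self (n : ℕ) : rad n ∣ n :=
  rad_eq_radical n ▸ radical_dvd_self

theorem squarefree_rad (n : ℕ) : Squarefree (rad n) :=
  rad_eq_radical n ▸ squarefree_radical

theorem rad_pos (n : ℕ) : 0 < rad n :=
  rad_eq_radical n ▸ Nat.radical_pos n

theorem rad_le_self {n : ℕ} (hn : n ≠ 0) : rad n ≤ n :=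
  rad_eq_radical n ▸ Nat.radical_le_self_iff.mpr hn

theorem rad_lt_self_of_not_squarefree {n : ℕ} (hn : n ≠ 0) (h : ¬ Squarefree n) : rad n < n :=
  (rad_le_self hn).lt_of_ne fun heq ↦ h (heq ▸ squarefree_rad n)

theorem rad_mul_of_coprime {m n : ℕ} (h : m.Coprime n) : rad (m * n) = rad m * rad n := by
  simp only [rad_eq_radical, radical_mul (Nat.coprime_iff_isRelPrime.mp h)]

theorem rad_pow (n : ℕ) {k : ℕ} (hk : k ≠ 0) : rad (n ^ k) = rad n := by
  simp only [rad_eq_radical, radical_pow n hk]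

theorem rad_dvd_of_dvd_pow {m n k : ℕ} (hm : m ≠ 0) (h : m ∣ n ^ k) : rad m ∣ n :=
  rad_eq_radical m ▸ (exists_dvd_pow_iff_radical_dvd hm).mp ⟨k, h⟩

theorem cosocle_mul_rad (n : ℕ) : cosocle n * rad n = n :=
  Nat.div_mul_cancel (rad_dvd_self n)

theorem cosocle_pos {n : ℕ} (hn : n ≠ 0) : 0 < cosocle n :=
  Nat.div_pos (rad_le_self hn) (rad_pos n)

theorem pow_dvd_cosocle_of_pow_succ_dvd {d n k : ℕ} (h : d ^ (k + 1) ∣ n) : d ^ k ∣ cosocle n := by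
  obtain rfl | hn := eq_or_ne n 0
  · simp [cosocle]
  obtain ⟨e, rfl⟩ := h
  have hrad : rad (d ^ (k + 1) * e) ∣ d * e :=
    rad_dvd_of_dvd_pow (k := k + 1) hn
      (mul_pow d e (k + 1) ▸ mul_dvd_mul_left _ (dvd_pow_self e k.succ_ne_zero))
  apply Nat.dvd_div_of_mul_dvd
  calc rad (d ^ (k + 1) * e) * d ^ k ∣ d * e * d ^ k := mul_dvd_mul_right hrad _
    _ = d ^ (k + 1) * e := by ring

theorem dvd_cosocle_of_sq_dvd {d n : ℕ} (h : d ^ 2 ∣ n) : d ∣ cosocle n :=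
  pow_one d ▸ pow_dvd_cosocle_of_pow_succ_dvd h

theorem le_cosocle_of_sq_dvd {d n : ℕ} (hn : n ≠ 0) (h : d ^ 2 ∣ n) : d ≤ cosocle n :=
  Nat.le_of_dvd (cosocle_pos hn) (dvd_cosocle_of_sq_dvd h)

theorem lt_cosocle_of_sq_dvd_of_cube_dvd {d n p : ℕ} (hn : n ≠ 0) (hp : p.Prime)
    (hd : d ^ 2 ∣ n) (hpn : p ^ 3 ∣ n) : d < cosocle n := by
  refine (le_cosocle_of_sq_dvd hn hd).lt_of_ne fun hdc ↦ ?_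
  have hfac : n = d * rad n := by rw [hdc, cosocle_mul_rad]
  have hd_pos : 0 < d := hdc ▸ cosocle_pos hn
  have hd_dvd : d ∣ rad n := by
    rw [hfac, sq] at hd
    exact Nat.dvd_of_mul_dvd_mul_left hd_pos hd
  have hd_squarefree : Squarefree d := (squarefree_rad n).squarefree_of_dvd hd_dvd
  have hp_sq_dvd : p ^ 2 ∣ rad n :=
    hd_squarefree.pow_dvd_of_squarefree_of_pow_succ_dvd_mul_right hp.prime (hfac ▸ hpn)
  exact hp.prime.not_isUnit (squarefree_rad n p (sq p ▸ hp_sq_dvd))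

theorem isABCTriple_one_iff {b : ℕ} (hb : 0 < b) :
    IsABCTriple 1 b (b + 1) ↔ rad (b + 1) ≤ cosocle b := by
  have hcoprime : b.Coprime (b + 1) := by simp
  rw [cosocle, Nat.le_div_iff_mul_le (rad_pos b), ← Nat.lt_succ_iff, mul_comm,
    ← rad_mul_of_coprime hcoprime]
  simp [IsABCTriple, hb, add_comm]

theorem pow_succ_dvd_pow_pow_sub_one {d n : ℕ} (hn : n ≠ 0) (hd : d ∣ n - 1) (j : ℕ) :
    d ^ (j + 1) ∣ n ^ d ^ j - 1 := by
  have hd_int : (d : ℤ) ∣ (n : ℤ) - 1 := by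
    simpa [Nat.one_le_iff_ne_zero.mpr hn] using Int.natCast_dvd_natCast.mpr hd
  have hdvd : (d : ℤ) ^ (j + 1) ∣ (n : ℤ) ^ d ^ j - 1 := by
    simpa only [one_pow] using dvd_sub_pow_of_dvd_sub hd_int j
  have hpow : 1 ≤ n ^ d ^ j := Nat.one_le_pow _ _ (Nat.pos_of_ne_zero hn)
  exact Int.natCast_dvd_natCast.mp (by simpa only [Nat.cast_sub hpow, Nat.cast_pow, Nat.cast_one])

theorem sq_dvd_pow_mul_sub_one {d n : ℕ} (hn : n ≠ 0) (hd : d ∣ n - 1) (k : ℕ) :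
    d ^ 2 ∣ n ^ (d * k) - 1 :=
  calc d ^ 2 ∣ n ^ d - 1 := by simpa using pow_succ_dvd_pow_pow_sub_one hn hd 1
    _ ∣ n ^ (d * k) - 1 := Nat.pow_sub_one_dvd_pow_sub_one n (dvd_mul_right d k)

theorem eight_dvd_pow_sub_one_of_odd_of_even {n m : ℕ} (hn : Odd n) (hm : Even m) :
    8 ∣ n ^ m - 1 :=
  (Nat.eight_dvd_sq_sub_one_of_odd hn).trans (Nat.pow_sub_one_dvd_pow_sub_one n hm.two_dvd)

theorem stmt_16 (n : ℕ) (hn : 1 < n) (h : Odd n ∨ (Even n ∧ ¬ Squarefree n)) :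
    ∀ k : ℕ, 0 < k →
      IsABCTriple 1 (n ^ ((n - 1) * k) - 1) (n ^ ((n - 1) * k)) := by
  intro k hk
  have hn_ne : n ≠ 0 := by omega
  have hexp : (n - 1) * k ≠ 0 := Nat.mul_ne_zero (by omega) hk.ne'
  obtain ⟨b, hb⟩ : ∃ b, n ^ ((n - 1) * k) = b + 1 :=
    Nat.exists_eq_succ_of_ne_zero (pow_ne_zero _ hn_ne)
  have hb_pos : 0 < b := by simpa [hb] using Nat.one_lt_pow hexp hn
  have hsq : (n - 1) ^ 2 ∣ b := by simpa [hb] using sq_dvd_pow_mul_sub_one hn_ne dvd_rfl k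
  rw [hb, Nat.add_sub_cancel, isABCTriple_one_iff hb_pos, ← hb, rad_pow n hexp]
  rcases h with hodd | ⟨-, hnot_squarefree⟩
  · have hcube : 2 ^ 3 ∣ b := by
      simpa [hb] using eight_dvd_pow_sub_one_of_odd_of_even hodd
        ((Nat.Odd.sub_odd hodd odd_one).mul_right k)
    calc rad n ≤ n := rad_le_self hn_ne
      _ ≤ cosocle b :=
        Nat.le_of_pred_lt (lt_cosocle_of_sq_dvd_of_cube_dvd hb_pos.ne' Nat.prime_two hsq hcube)
  · calc rad n ≤ n - 1 := Nat.le_sub_one_of_lt (rad_lt_self_of_not_squarefree hn_ne hnot_squarefree)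
      _ ≤ cosocle b := le_cosocle_of_sq_dvd hb_pos.ne' hsq
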